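/- There is no orthomorphism polynomial of degree 7 over F_23; that is, no polynomial f ∈ F_23[x] of degree 7 has the property that both f(x) and f(x) - x permute F_23. -/

import Mathlib

/-!
Write `f` for the polynomial and `a ≠ 0` for its leading coefficient. Since `f` and `f - x` both
permute the field, `∑ f(x)^4` and `∑ (f(x) - x)^4` are both equal to `∑ x^4`, so the polynomial
`f^4 - (f - X)^4 = 4 f^3 X - 6 f^2 X^2 + 4 f X^3 - X^4` has vanishing sum of values. It has
degree at most 22, and its `X^22` coefficient is `4 a^3`, coming from `4 f^3 X` alone. But for a
polynomial of degree at most `22 = q - 1` the sum of all values is minus the coefficient of `X^22`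
(`sum_eval_eq_neg_coeff`), so `4 a^3 = 0`, a contradiction.
-/

open Polynomial in
theorem sum_eval_eq_neg_coeff (p : (ZMod 23)[X]) (hp : p.natDegree < 23) :
    ∑ x : ZMod 23, p.eval x = -p.coeff 22 := by
  have key : ∀ i ∈ Finset.range 22, ∑ x : ZMod 23, x ^ i = 0 := by decide +kernel
  have key22 : ∑ x : ZMod 23, x ^ 22 = -1 := by decide +kernel
  simp_rw [eval_eq_sum_range' hp]
  rw [Finset.sum_comm]
  simp_rw [← Finset.mul_sum]
  rw [Finset.sum_range_succ, key22, Finset.sum_eq_zero fun i hi => by rw [key i hi, mul_zero]]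
  ring

/-- There is no orthomorphism polynomial of degree 7 over `F_23`. -/
theorem stmt_7 :
    ¬ ∃ f : Polynomial (ZMod 23), f.degree = 7 ∧
      Function.Bijective (fun x : ZMod 23 => f.eval x) ∧
      Function.Bijective (fun x : ZMod 23 => f.eval x - x) := by
  rintro ⟨f, hdeg, hf, hg⟩
  have h40 : (4 : ZMod 23) ≠ 0 := by decide
  have : Fact (Nat.Prime 23) := ⟨by norm_num⟩
  have hnat : f.natDegree = 7 := Polynomial.natDegree_eq_of_degree_eq_some hdeg
  have hlead : f.coeff 7 ≠ 0 := Polynomial.coeff_ne_zero_of_eq_degree hdeg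
  have h1 := hf.sum_comp (fun y : ZMod 23 => y ^ 4)
  have h2 := hg.sum_comp (fun y : ZMod 23 => y ^ 4)
  have hf3 : (f ^ 3).natDegree ≤ 21 := by
    simp [hnat]
  -- The part of `f ^ 4 - (f - X) ^ 4` that cannot reach degree 22.
  let r : Polynomial (ZMod 23) :=
    -6 * f ^ 2 * Polynomial.X ^ 2 + 4 * f * Polynomial.X ^ 3 - Polynomial.X ^ 4
  have hr : r.natDegree ≤ 16 := by
    have hf7 : f.natDegree ≤ 7 := hnat.le
    have hf2 : (f ^ 2).natDegree ≤ 14 := by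
      simp [hnat]
    dsimp only [r]
    compute_degree
    omega
  let p : Polynomial (ZMod 23) := 4 * (f ^ 3 * Polynomial.X) + r
  have hp : p.natDegree < 23 := by
    refine Nat.lt_succ_of_le ?_
    dsimp only [p]
    compute_degree
    omega
  have hcoeff : p.coeff 22 = 4 * f.coeff 7 ^ 3 := by
    have h4 : (4 : Polynomial (ZMod 23)) = Polynomial.C 4 := rfl
    have hc : (f ^ 3).coeff 21 = f.coeff 7 ^ 3 := by
      simpa using Polynomial.coeff_pow_of_natDegree_le (m := 3) hnat.le
    dsimp only [p]
    rw [Polynomial.coeff_add, Polynomial.coeff_eq_zero_of_natDegree_lt (by omega : r.natDegree < 22),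
      h4, Polynomial.coeff_C_mul, Polynomial.coeff_mul_X, hc, add_zero]
  have heval : ∑ x : ZMod 23, p.eval x = 0 := by
    have : ∀ x : ZMod 23, p.eval x = f.eval x ^ 4 - (f.eval x - x) ^ 4 := by
      intro x
      simp only [p, r, Polynomial.eval_add, Polynomial.eval_sub, Polynomial.eval_mul,
        Polynomial.eval_pow, Polynomial.eval_X, Polynomial.eval_ofNat, Polynomial.eval_neg]
      ring
    simp_rw [this, Finset.sum_sub_distrib]
    exact sub_eq_zero.mpr (h1.trans h2.symm)
  rw [sum_eval_eq_neg_coeff p hp, hcoeff, neg_eq_zero] at heval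
  exact mul_ne_zero h40 (pow_ne_zero 3 hlead) heval
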